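/- arXiv:1905.00605 — 2 statements merged into one kernel-verified Lean document; each statement's English description precedes it below -/
import Mathlib

section
/- Let X be a real Banach space that is 2-convex and 2-smooth. Then there exist constants C, C', C̃ > 0 such that for ALL x, y ∈ X (without any boundedness restriction): D_2(x,y) ≤ C‖x−y‖², D_2(x,y) ≥ C'‖x−y‖², and D_2(x,y) ≤ C̃ · D_2(y,x). -/
open Filter Topology

noncomputable section

/-- The modulus of convexity of a normed space `X`. -/
def modConvex (X : Type*) [NormedAddCommGroup X] (ε : ℝ) : ℝ :=
  sInf {d : ℝ | ∃ x y : X, ‖x‖ = 1 ∧ ‖y‖ = 1 ∧ ε ≤ ‖x - y‖ ∧ d = 1 - ‖x + y‖ / 2}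

/-- The modulus of smoothness of a normed space `X`. -/
def modSmooth (X : Type*) [NormedAddCommGroup X] [NormedSpace ℝ X] (τ : ℝ) : ℝ :=
  sSup {d : ℝ | ∃ x y : X, ‖x‖ = 1 ∧ ‖y‖ = 1 ∧ d = (‖x + τ • y‖ + ‖x - τ • y‖) / 2 - 1}

/-- `X` is uniformly convex: the modulus of convexity is positive for positive ε. -/
def UnifConvex (X : Type*) [NormedAddCommGroup X] : Prop :=
  ∀ ε : ℝ, 0 < ε → ε ≤ 2 → 0 < modConvex X ε

/-- `X` is uniformly smooth: `ρ_X(τ)/τ → 0` as `τ → 0⁺`. -/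
def UnifSmooth (X : Type*) [NormedAddCommGroup X] [NormedSpace ℝ X] : Prop :=
  Tendsto (fun τ => modSmooth X τ / τ) (𝓝[>] (0 : ℝ)) (𝓝 0)

/-- `X` is uniformly convex of power type `ρ`. -/
def PowerConvex (X : Type*) [NormedAddCommGroup X] (ρ : ℝ) : Prop :=
  ∃ c > (0 : ℝ), ∀ ε ∈ Set.Icc (0 : ℝ) 2, c * ε ^ ρ ≤ modConvex X ε

/-- `X` is uniformly smooth of power type `σ` (with `σ > 1`). -/
def PowerSmooth (X : Type*) [NormedAddCommGroup X] [NormedSpace ℝ X] (σ : ℝ) : Prop :=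
  1 < σ ∧ ∃ C > (0 : ℝ), ∀ τ ∈ Set.Icc (0 : ℝ) 1, modSmooth X τ ≤ C * τ ^ σ

variable {X : Type*} [NormedAddCommGroup X] [NormedSpace ℝ X]

/-- The duality mapping `j_p`, the Fréchet derivative of `x ↦ (1/p)‖x‖^p`. -/
def dualityMap (p : ℝ) (x : X) : X →L[ℝ] ℝ :=
  fderiv ℝ (fun y : X => 1 / p * ‖y‖ ^ p) x

/-- The Bregman distance `D_p(x, y)`. -/
def bregmanDist (p : ℝ) (x y : X) : ℝ :=
  1 / p * ‖x‖ ^ p - 1 / p * ‖y‖ ^ p - dualityMap p y (x - y)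

/-- The Bregman projection of `x` onto the set `S`: the minimizer of `m ↦ D_p(m, x)` over `S`. -/
def bregmanProj (p : ℝ) (S : Set X) (x : X) : X :=
  letI : Nonempty X := ⟨x⟩
  Classical.epsilon fun y => y ∈ S ∧ ∀ m ∈ S, bregmanDist p y x ≤ bregmanDist p m x

/-- The Bregman distance `D_p(S, x)` from the point `x` to the set `S`. -/
def bregmanDistSet (p : ℝ) (S : Set X) (x : X) : ℝ :=
  bregmanDist p (bregmanProj p S x) x

/-- The metric projection of `x` onto the set `S`: the point of `S` nearest to `x`. -/
def metricProj (S : Set X) (x : X) : X :=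
  letI : Nonempty X := ⟨x⟩
  Classical.epsilon fun y => y ∈ S ∧ ∀ m ∈ S, ‖x - y‖ ≤ ‖x - m‖

/-!
Each modulus hypothesis gives a perturbed parallelogram law, with an inequality in place of the
equality and a constant in front of `‖x - y‖ ^ 2`.

The upper law says that the second differences of `‖·‖ ^ 2 / 2` are at most quadratic. A Hahn–Banach
subgradient of this convex function therefore has a quadratic error, so it is the Fréchet derivative
`dualityMap 2 y`, and the error, which is the Bregman distance, is bounded by a multiple of
`‖x - y‖ ^ 2`. The lower law says that `‖·‖ ^ 2 / 2` is strongly midpoint convex; comparing this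
with the tangent at `y`, evaluated at the midpoint of `x` and `y`, bounds the Bregman distance from
below. Almost symmetry is immediate, as both bounds are symmetric in `x` and `y`.
-/

theorem exists_norm_eq_one_norm_smul_eq [Nontrivial X] (x : X) :
    ∃ u : X, ‖u‖ = 1 ∧ ‖x‖ • u = x := by
  rcases eq_or_ne x 0 with rfl | hx
  · obtain ⟨u, hu⟩ := exists_norm_eq X zero_le_one
    exact ⟨u, hu, by rw [norm_zero, zero_smul]⟩
  · exact ⟨‖x‖⁻¹ • x, norm_smul_inv_norm (𝕜 := ℝ) hx, smul_inv_smul₀ (norm_ne_zero_iff.2 hx) x⟩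

theorem norm_smul_add_smul_le {r s : ℝ} (hs : 0 ≤ s) (hsr : s ≤ r) (u v : X) :
    ‖r • u + s • v‖ ≤ (r - s) * ‖u‖ + s * ‖u + v‖ :=
  calc ‖r • u + s • v‖ = ‖(r - s) • u + s • (u + v)‖ := by congr 1; module
    _ ≤ ‖(r - s) • u‖ + ‖s • (u + v)‖ := norm_add_le _ _
    _ = (r - s) * ‖u‖ + s * ‖u + v‖ := by
      rw [norm_smul_of_nonneg (sub_nonneg.2 hsr), norm_smul_of_nonneg hs]

theorem modConvex_le {E : Type*} [NormedAddCommGroup E] {u v : E} (hu : ‖u‖ = 1) (hv : ‖v‖ = 1) :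
    modConvex E ‖u - v‖ ≤ 1 - ‖u + v‖ / 2 := by
  refine csInf_le ⟨0, ?_⟩ ⟨u, v, hu, hv, le_rfl, rfl⟩
  rintro d ⟨x, y, hx, hy, -, rfl⟩
  linarith [norm_add_le x y]

theorem le_modSmooth {u v : X} (hu : ‖u‖ = 1) (hv : ‖v‖ = 1) (τ : ℝ) :
    (‖u + τ • v‖ + ‖u - τ • v‖) / 2 - 1 ≤ modSmooth X τ := by
  refine le_csSup ⟨|τ|, ?_⟩ ⟨u, v, hu, hv, rfl⟩
  rintro d ⟨x, y, hx, hy, rfl⟩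
  have hτy : ‖τ • y‖ = |τ| := by rw [norm_smul, hy, mul_one, Real.norm_eq_abs]
  linarith [norm_add_le x (τ • y), norm_sub_le x (τ • y)]

theorem norm_smul_add_smul_le_modConvex {u v : X} (hu : ‖u‖ = 1) (hv : ‖v‖ = 1) {r s : ℝ}
    (hs : 0 ≤ s) (hsr : s ≤ r) :
    ‖r • u + s • v‖ ≤ r + s - 2 * s * modConvex X ‖u - v‖ :=
  calc ‖r • u + s • v‖ ≤ (r - s) * ‖u‖ + s * ‖u + v‖ := norm_smul_add_smul_le hs hsr u v
    _ ≤ (r - s) * 1 + s * (2 - 2 * modConvex X ‖u - v‖) := by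
      rw [hu]
      gcongr
      linarith [modConvex_le hu hv]
    _ = r + s - 2 * s * modConvex X ‖u - v‖ := by ring

theorem norm_add_add_norm_sub_le_modSmooth {x : X} (hx : x ≠ 0) (h : X) :
    ‖x + h‖ + ‖x - h‖ ≤ 2 * ‖x‖ * (1 + modSmooth X (‖h‖ / ‖x‖)) := by
  have : Nontrivial X := nontrivial_of_ne x 0 hx
  obtain ⟨u, hu, hxu⟩ := exists_norm_eq_one_norm_smul_eq x
  obtain ⟨v, hv, hhv⟩ := exists_norm_eq_one_norm_smul_eq h
  set τ := ‖h‖ / ‖x‖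
  have hτ : h = ‖x‖ • τ • v := by
    rw [smul_smul, mul_div_cancel₀ _ (norm_ne_zero_iff.2 hx), hhv]
  calc ‖x + h‖ + ‖x - h‖ = ‖‖x‖ • (u + τ • v)‖ + ‖‖x‖ • (u - τ • v)‖ := by
        rw [smul_add, smul_sub, hxu, ← hτ]
    _ = ‖x‖ * (‖u + τ • v‖ + ‖u - τ • v‖) := by
        rw [norm_smul, norm_smul, norm_norm, mul_add]
    _ ≤ ‖x‖ * (2 * (1 + modSmooth X τ)) := by
        gcongr
        linarith [le_modSmooth hu hv τ]
    _ = 2 * ‖x‖ * (1 + modSmooth X τ) := by ring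

/-- The lower weak parallelogram law with constant `k`: one half of the parallelogram identity, with
the term `‖x - y‖ ^ 2` weighted by `k`. It is the homogeneous form of 2-convexity. -/
def LowerWeakParallelogramLaw (E : Type*) [NormedAddCommGroup E] (k : ℝ) : Prop :=
  ∀ x y : E, ‖x + y‖ ^ 2 + k * ‖x - y‖ ^ 2 ≤ 2 * (‖x‖ ^ 2 + ‖y‖ ^ 2)

/-- The upper weak parallelogram law with constant `K`: the other half of the parallelogram
identity, with the term `‖x - y‖ ^ 2` weighted by `K`. It is the homogeneous form of
2-smoothness. -/
def UpperWeakParallelogramLaw (E : Type*) [NormedAddCommGroup E] (K : ℝ) : Prop :=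
  ∀ x y : E, 2 * (‖x‖ ^ 2 + ‖y‖ ^ 2) ≤ ‖x + y‖ ^ 2 + K * ‖x - y‖ ^ 2

theorem LowerWeakParallelogramLaw.of_norm_le {E : Type*} [NormedAddCommGroup E] {k : ℝ}
    (h : ∀ x y : E, ‖y‖ ≤ ‖x‖ → ‖x + y‖ ^ 2 + k * ‖x - y‖ ^ 2 ≤ 2 * (‖x‖ ^ 2 + ‖y‖ ^ 2)) :
    LowerWeakParallelogramLaw E k := fun x y ↦ by
  rcases le_total ‖y‖ ‖x‖ with hyx | hxy
  · exact h x y hyx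
  · rw [add_comm x, norm_sub_rev, add_comm (‖x‖ ^ 2)]
    exact h y x hxy

theorem mul_sq_le_sq_sub_norm_smul_add_smul_sq {c : ℝ} (hc : 0 ≤ c) {u v : X} (hu : ‖u‖ = 1)
    (hv : ‖v‖ = 1) (hmod : c * ‖u - v‖ ^ 2 ≤ modConvex X ‖u - v‖) {r s : ℝ} (hs : 0 ≤ s)
    (hsr : s ≤ r) :
    4 * c * (s * ‖u - v‖) ^ 2 ≤ (r + s) ^ 2 - ‖r • u + s • v‖ ^ 2 := by
  set N := ‖r • u + s • v‖
  have hN₀ : 0 ≤ N := norm_nonneg _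
  have hN : 2 * s * (c * ‖u - v‖ ^ 2) ≤ r + s - N := by
    have hmul : 2 * s * (c * ‖u - v‖ ^ 2) ≤ 2 * s * modConvex X ‖u - v‖ := by gcongr
    linarith [norm_smul_add_smul_le_modConvex hu hv hs hsr]
  have hgap : 0 ≤ r + s - N := le_trans (by positivity) hN
  calc 4 * c * (s * ‖u - v‖) ^ 2 = 2 * s * (c * ‖u - v‖ ^ 2) * (2 * s) := by ring
    _ ≤ (r + s - N) * (r + s + N) := by
      gcongr
      linarith
    _ = (r + s) ^ 2 - N ^ 2 := by ring

theorem lower_weak_parallelogram_of_norm_eq_one {c : ℝ} (hc : 0 ≤ c) {u v : X} (hu : ‖u‖ = 1)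
    (hv : ‖v‖ = 1) (hmod : c * ‖u - v‖ ^ 2 ≤ modConvex X ‖u - v‖) {r s : ℝ} (hs : 0 ≤ s)
    (hsr : s ≤ r) :
    ‖r • u + s • v‖ ^ 2 + min (1 / 2) (2 * c) * ‖r • u - s • v‖ ^ 2 ≤ 2 * (r ^ 2 + s ^ 2) := by
  -- `r • u - s • v` has a radial part of size `r - s` and an angular part of size `s * ‖u - v‖`.
  have hpolar : ‖r • u - s • v‖ ≤ (r - s) + s * ‖u - v‖ := by
    have := norm_smul_add_smul_le hs hsr u (-v)
    rwa [hu, mul_one, smul_neg, ← sub_eq_add_neg, ← sub_eq_add_neg] at this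
  have hdiff :
      min (1 / 2) (2 * c) * ‖r • u - s • v‖ ^ 2 ≤ (r - s) ^ 2 + 4 * c * (s * ‖u - v‖) ^ 2 :=
    calc min (1 / 2) (2 * c) * ‖r • u - s • v‖ ^ 2
        ≤ min (1 / 2) (2 * c) * (2 * ((r - s) ^ 2 + (s * ‖u - v‖) ^ 2)) := by
          gcongr
          exact (pow_le_pow_left₀ (norm_nonneg _) hpolar 2).trans add_sq_le
      _ = min (1 / 2) (2 * c) * (2 * (r - s) ^ 2)
          + min (1 / 2) (2 * c) * (2 * (s * ‖u - v‖) ^ 2) := by ring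
      _ ≤ 1 / 2 * (2 * (r - s) ^ 2) + 2 * c * (2 * (s * ‖u - v‖) ^ 2) := by
          gcongr
          · exact min_le_left _ _
          · exact min_le_right _ _
      _ = (r - s) ^ 2 + 4 * c * (s * ‖u - v‖) ^ 2 := by ring
  linarith [mul_sq_le_sq_sub_norm_smul_add_smul_sq hc hu hv hmod hs hsr]

theorem lowerWeakParallelogramLaw_of_le_modConvex {c : ℝ} (hc : 0 ≤ c)
    (hmod : ∀ ε ∈ Set.Icc (0 : ℝ) 2, c * ε ^ 2 ≤ modConvex X ε) :
    LowerWeakParallelogramLaw X (min (1 / 2) (2 * c)) := by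
  refine .of_norm_le fun x y hyx ↦ ?_
  nontriviality X
  obtain ⟨u, hu, hxu⟩ := exists_norm_eq_one_norm_smul_eq x
  obtain ⟨v, hv, hyv⟩ := exists_norm_eq_one_norm_smul_eq y
  have huv : ‖u - v‖ ≤ 2 := by linarith [norm_sub_le u v]
  have := lower_weak_parallelogram_of_norm_eq_one hc hu hv (hmod _ ⟨norm_nonneg _, huv⟩)
    (norm_nonneg y) hyx
  rwa [hxu, hyv] at this

theorem upperWeakParallelogramLaw_iff_norm_add_sq_add_norm_sub_sq_le {K : ℝ} :
    UpperWeakParallelogramLaw X K ↔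
      ∀ x h : X, ‖x + h‖ ^ 2 + ‖x - h‖ ^ 2 ≤ 2 * (‖x‖ ^ 2 + K * ‖h‖ ^ 2) := by
  constructor
  · intro hK x h
    have := hK (x + h) (x - h)
    rw [show x + h + (x - h) = (2 : ℝ) • x by module,
      show x + h - (x - h) = (2 : ℝ) • h by module,
      norm_smul_of_nonneg zero_le_two, norm_smul_of_nonneg zero_le_two] at this
    linarith
  · intro hK x y
    have := hK ((1 / 2 : ℝ) • (x + y)) ((1 / 2 : ℝ) • (x - y))
    rw [show (1 / 2 : ℝ) • (x + y) + (1 / 2 : ℝ) • (x - y) = x by module,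
      show (1 / 2 : ℝ) • (x + y) - (1 / 2 : ℝ) • (x - y) = y by module,
      norm_smul_of_nonneg one_half_pos.le, norm_smul_of_nonneg one_half_pos.le] at this
    linarith

theorem sq_norm_add_sub_norm_sub_le (x h : X) :
    (‖x + h‖ - ‖x - h‖) ^ 2 ≤ (2 * ‖h‖) ^ 2 := by
  rw [sq_le_sq, abs_of_nonneg (by positivity : 0 ≤ 2 * ‖h‖)]
  calc |‖x + h‖ - ‖x - h‖| ≤ ‖x + h - (x - h)‖ := abs_norm_sub_norm_le _ _
    _ = ‖(2 : ℝ) • h‖ := by congr 1; module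
    _ = 2 * ‖h‖ := norm_smul_of_nonneg zero_le_two h

theorem norm_add_sq_add_norm_sub_sq_le_of_norm_le {C : ℝ} {x h : X} (hx : x ≠ 0)
    (hhx : ‖h‖ ≤ ‖x‖) (hmod : modSmooth X (‖h‖ / ‖x‖) ≤ C * (‖h‖ / ‖x‖) ^ 2) :
    ‖x + h‖ ^ 2 + ‖x - h‖ ^ 2 ≤ 2 * (‖x‖ ^ 2 + (1 + C) ^ 2 * ‖h‖ ^ 2) := by
  have hx₀ : 0 < ‖x‖ := norm_pos_iff.2 hx
  set τ := ‖h‖ / ‖x‖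
  have hh : ‖h‖ = ‖x‖ * τ := (mul_div_cancel₀ _ hx₀.ne').symm
  have hτ : τ ^ 4 ≤ τ ^ 2 :=
    pow_le_pow_of_le_one (by positivity) ((div_le_one hx₀).2 hhx) (by norm_num)
  have hsum : (‖x + h‖ + ‖x - h‖) ^ 2 ≤ 4 * ‖x‖ ^ 2 + (8 * C + 4 * C ^ 2) * ‖h‖ ^ 2 :=
    calc (‖x + h‖ + ‖x - h‖) ^ 2 ≤ (2 * ‖x‖ * (1 + C * τ ^ 2)) ^ 2 := by
          gcongr
          exact (norm_add_add_norm_sub_le_modSmooth hx h).trans (by gcongr)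
      _ = 4 * ‖x‖ ^ 2 * (1 + 2 * C * τ ^ 2 + C ^ 2 * τ ^ 4) := by ring
      _ ≤ 4 * ‖x‖ ^ 2 * (1 + 2 * C * τ ^ 2 + C ^ 2 * τ ^ 2) := by gcongr
      _ = 4 * ‖x‖ ^ 2 + (8 * C + 4 * C ^ 2) * ‖h‖ ^ 2 := by rw [hh]; ring
  linarith [sq_norm_add_sub_norm_sub_le x h]

theorem upperWeakParallelogramLaw_of_modSmooth_le {C : ℝ}
    (hmod : ∀ τ ∈ Set.Icc (0 : ℝ) 1, modSmooth X τ ≤ C * τ ^ 2) :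
    UpperWeakParallelogramLaw X ((1 + C) ^ 2 + 3) := by
  refine upperWeakParallelogramLaw_iff_norm_add_sq_add_norm_sub_sq_le.2 fun x h ↦ ?_
  rcases lt_or_ge ‖x‖ ‖h‖ with hxh | hhx
  · calc ‖x + h‖ ^ 2 + ‖x - h‖ ^ 2 ≤ (‖x‖ + ‖h‖) ^ 2 + (‖x‖ + ‖h‖) ^ 2 := by
          gcongr
          · exact norm_add_le x h
          · exact norm_sub_le x h
      _ = 2 * (‖x‖ ^ 2 + (2 * ‖x‖ + ‖h‖) * ‖h‖) := by ring
      _ ≤ 2 * (‖x‖ ^ 2 + (2 * ‖h‖ + ‖h‖) * ‖h‖) := by gcongr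
      _ ≤ 2 * (‖x‖ ^ 2 + ((1 + C) ^ 2 + 3) * ‖h‖ ^ 2) := by
          linarith [mul_nonneg (sq_nonneg (1 + C)) (sq_nonneg ‖h‖)]
  · rcases eq_or_ne x 0 with rfl | hx
    · have hh : h = 0 := norm_le_zero_iff.1 (hhx.trans_eq norm_zero)
      simp [hh]
    · have hτ := hmod (‖h‖ / ‖x‖) ⟨by positivity, div_le_one_of_le₀ hhx (norm_nonneg x)⟩
      linarith [norm_add_sq_add_norm_sub_sq_le_of_norm_le hx hhx hτ, sq_nonneg ‖h‖]

/-- The continuous linear functional `l` is a subgradient of `f` at `y`, stated as a lower bound on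
the increments of `f`. It encodes the tangents of convex functions without any differentiability. -/
def IsSubgradientAt (f : X → ℝ) (l : X →L[ℝ] ℝ) (y : X) : Prop :=
  ∀ x, l (x - y) ≤ f x - f y

theorem IsSubgradientAt.eq_of_hasFDerivAt {f : X → ℝ} {l f' : X →L[ℝ] ℝ} {y : X}
    (hl : IsSubgradientAt f l y) (hf : HasFDerivAt f f' y) : l = f' := by
  have hmin : IsLocalMin (fun x ↦ f x - l x) y :=
    .of_forall fun x ↦ by linarith [hl x, map_sub l x y]
  exact (sub_eq_zero.1 (hmin.hasFDerivAt_eq_zero (hf.sub l.hasFDerivAt))).symm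

theorem IsSubgradientAt.hasFDerivAt_of_sub_le {f : X → ℝ} {l : X →L[ℝ] ℝ} {y : X} {K : ℝ}
    (hl : IsSubgradientAt f l y) (hK : ∀ x, f x - f y ≤ l (x - y) + K * ‖x - y‖ ^ 2) :
    HasFDerivAt f l y := by
  have herror : (fun x ↦ f x - f y - l (x - y)) =O[𝓝 y] fun x ↦ ‖x - y‖ ^ 2 := by
    refine .of_bound K (.of_forall fun x ↦ ?_)
    rw [Real.norm_of_nonneg (sub_nonneg.2 (hl x)), Real.norm_of_nonneg (sq_nonneg _)]
    exact sub_le_iff_le_add'.2 (hK x)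
  exact .of_isLittleO (herror.trans_isLittleO (Asymptotics.isLittleO_pow_sub_sub y one_lt_two))

theorem exists_isSubgradientAt_half_norm_sq (y : X) :
    ∃ l : X →L[ℝ] ℝ, IsSubgradientAt (fun z ↦ 1 / 2 * ‖z‖ ^ 2) l y := by
  obtain ⟨g, hg, hgy⟩ := exists_dual_vector'' ℝ y
  replace hgy : g y = ‖y‖ := hgy
  refine ⟨‖y‖ • g, fun x ↦ ?_⟩
  have hgx : g x ≤ ‖x‖ := (le_abs_self _).trans ((g.le_of_opNorm_le hg x).trans_eq (one_mul _))
  calc (‖y‖ • g) (x - y) = ‖y‖ * g x - ‖y‖ ^ 2 := by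
        rw [smul_apply, map_sub, hgy, smul_eq_mul, mul_sub, sq]
    _ ≤ ‖y‖ * ‖x‖ - ‖y‖ ^ 2 := by gcongr
    _ ≤ 1 / 2 * ‖x‖ ^ 2 - 1 / 2 * ‖y‖ ^ 2 := by linarith [two_mul_le_add_sq ‖y‖ ‖x‖]

theorem UpperWeakParallelogramLaw.half_norm_sq_sub_le {K : ℝ} (hK : UpperWeakParallelogramLaw X K)
    {l : X →L[ℝ] ℝ} {y : X} (hl : IsSubgradientAt (fun z ↦ 1 / 2 * ‖z‖ ^ 2) l y) (x : X) :
    1 / 2 * ‖x‖ ^ 2 - 1 / 2 * ‖y‖ ^ 2 ≤ l (x - y) + K * ‖x - y‖ ^ 2 := by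
  have hreflect := hl (y - (x - y))
  rw [sub_sub_cancel_left, map_neg] at hreflect
  have hsum := upperWeakParallelogramLaw_iff_norm_add_sq_add_norm_sub_sq_le.1 hK y (x - y)
  rw [add_sub_cancel] at hsum
  linarith

theorem UpperWeakParallelogramLaw.differentiableAt_half_norm_sq {K : ℝ}
    (hK : UpperWeakParallelogramLaw X K) (y : X) :
    DifferentiableAt ℝ (fun z : X ↦ 1 / 2 * ‖z‖ ^ 2) y := by
  obtain ⟨l, hl⟩ := exists_isSubgradientAt_half_norm_sq y
  exact (hl.hasFDerivAt_of_sub_le (hK.half_norm_sq_sub_le hl)).differentiableAt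

theorem isSubgradientAt_dualityMap_two {y : X}
    (hdiff : DifferentiableAt ℝ (fun z : X ↦ 1 / 2 * ‖z‖ ^ 2) y) :
    IsSubgradientAt (fun z ↦ 1 / 2 * ‖z‖ ^ 2) (dualityMap 2 y) y := by
  obtain ⟨l, hl⟩ := exists_isSubgradientAt_half_norm_sq y
  have hdual : dualityMap 2 y = l := by
    simp only [dualityMap, Real.rpow_two]
    exact (hl.eq_of_hasFDerivAt hdiff.hasFDerivAt).symm
  exact hdual ▸ hl

theorem bregmanDist_two (x y : X) :
    bregmanDist 2 x y = 1 / 2 * ‖x‖ ^ 2 - 1 / 2 * ‖y‖ ^ 2 - dualityMap 2 y (x - y) := by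
  simp only [bregmanDist, Real.rpow_two]

theorem UpperWeakParallelogramLaw.bregmanDist_two_le {K : ℝ} (hK : UpperWeakParallelogramLaw X K)
    (x y : X) : bregmanDist 2 x y ≤ K * ‖x - y‖ ^ 2 := by
  rw [bregmanDist_two, sub_le_iff_le_add']
  exact hK.half_norm_sq_sub_le
    (isSubgradientAt_dualityMap_two (hK.differentiableAt_half_norm_sq y)) x

theorem LowerWeakParallelogramLaw.le_bregmanDist_two {k : ℝ} (hk : LowerWeakParallelogramLaw X k)
    {y : X} (hdiff : DifferentiableAt ℝ (fun z : X ↦ 1 / 2 * ‖z‖ ^ 2) y) (x : X) :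
    k / 4 * ‖x - y‖ ^ 2 ≤ bregmanDist 2 x y := by
  have hmidpoint := isSubgradientAt_dualityMap_two hdiff ((1 / 2 : ℝ) • (x + y))
  beta_reduce at hmidpoint
  rw [show (1 / 2 : ℝ) • (x + y) - y = (1 / 2 : ℝ) • (x - y) by module, map_smul, smul_eq_mul,
    norm_smul_of_nonneg one_half_pos.le] at hmidpoint
  rw [bregmanDist_two]
  linarith [hk x y]

theorem bregmanDist_le_mul_bregmanDist_swap {p C c : ℝ} (hC : 0 ≤ C) (hc : 0 < c) {x y : X}
    (hupper : bregmanDist p x y ≤ C * ‖x - y‖ ^ 2) (hlower : c * ‖y - x‖ ^ 2 ≤ bregmanDist p y x) :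
    bregmanDist p x y ≤ C / c * bregmanDist p y x :=
  calc bregmanDist p x y ≤ C * ‖x - y‖ ^ 2 := hupper
    _ = C / c * (c * ‖y - x‖ ^ 2) := by
      rw [norm_sub_rev]
      field_simp
    _ ≤ C / c * bregmanDist p y x := by gcongr

theorem statement3_general {X : Type*} [NormedAddCommGroup X] [NormedSpace ℝ X]
    (hconv : PowerConvex X 2) (hsmooth : PowerSmooth X 2) :
    ∃ C > (0 : ℝ), ∃ C' > (0 : ℝ), ∃ Ct > (0 : ℝ), ∀ x y : X,
      bregmanDist 2 x y ≤ C * ‖x - y‖ ^ (2 : ℝ) ∧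
      C' * ‖x - y‖ ^ (2 : ℝ) ≤ bregmanDist 2 x y ∧
      bregmanDist 2 x y ≤ Ct * bregmanDist 2 y x := by
  obtain ⟨c, hc, hmodConvex⟩ := hconv
  obtain ⟨-, C, -, hmodSmooth⟩ := hsmooth
  simp only [Real.rpow_two] at hmodConvex hmodSmooth ⊢
  have hlaw_lower := lowerWeakParallelogramLaw_of_le_modConvex hc.le hmodConvex
  have hlaw_upper := upperWeakParallelogramLaw_of_modSmooth_le hmodSmooth
  set k := min (1 / 2) (2 * c)
  set K := (1 + C) ^ 2 + 3
  have hk : 0 < k / 4 := by positivity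
  have hK : 0 < K := by positivity
  have hupper (x y : X) := hlaw_upper.bregmanDist_two_le x y
  have hlower (x y : X) :=
    hlaw_lower.le_bregmanDist_two (hlaw_upper.differentiableAt_half_norm_sq y) x
  exact ⟨K, hK, k / 4, hk, K / (k / 4), by positivity, fun x y ↦ ⟨hupper x y, hlower x y,
    bregmanDist_le_mul_bregmanDist_swap hK.le hk (hupper x y) (hlower y x)⟩⟩

theorem statement3 {X : Type*} [NormedAddCommGroup X] [NormedSpace ℝ X] [CompleteSpace X]
    (hconv : PowerConvex X 2) (hsmooth : PowerSmooth X 2) :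
    ∃ C > (0 : ℝ), ∃ C' > (0 : ℝ), ∃ Ct > (0 : ℝ), ∀ x y : X,
      bregmanDist 2 x y ≤ C * ‖x - y‖ ^ (2 : ℝ) ∧
      C' * ‖x - y‖ ^ (2 : ℝ) ≤ bregmanDist 2 x y ∧
      bregmanDist 2 x y ≤ Ct * bregmanDist 2 y x :=
  statement3_general hconv hsmooth
end
end

section
/- Let X be a real Banach space that is uniformly convex and uniformly smooth, let 1 < p < ∞, and let M, N be closed linear subspaces of X. Then the following assertions are equivalent: (i) the pair (M,N) is Bregman regular; (ii) (M,N) is linear Bregman regular; (iii) (M,N) is boundedly linear Bregman regular. -/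
open Filter Topology

noncomputable section

variable {X : Type*} [NormedAddCommGroup X] [NormedSpace ℝ X]

/-- The pair `(M, N)` is Bregman regular. -/
def BregmanRegular (p : ℝ) {X : Type*} [NormedAddCommGroup X] [NormedSpace ℝ X]
    (M N : Submodule ℝ X) : Prop :=
  ∀ ε > (0 : ℝ), ∃ δ > (0 : ℝ), ∀ x : X,
    max (bregmanDistSet p (M : Set X) x) (bregmanDistSet p (N : Set X) x) < δ →
      bregmanDistSet p ((M ⊓ N : Submodule ℝ X) : Set X) x < ε

/-- The pair `(M, N)` is linear Bregman regular. -/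
def LinearBregmanRegular (p : ℝ) {X : Type*} [NormedAddCommGroup X] [NormedSpace ℝ X]
    (M N : Submodule ℝ X) : Prop :=
  ∃ κ > (0 : ℝ), ∀ x : X,
    bregmanDistSet p ((M ⊓ N : Submodule ℝ X) : Set X) x ≤
      κ * max (bregmanDistSet p (M : Set X) x) (bregmanDistSet p (N : Set X) x)

/-- The pair `(M, N)` is boundedly linear Bregman regular. -/
def BoundedlyLinearBregmanRegular (p : ℝ) {X : Type*} [NormedAddCommGroup X] [NormedSpace ℝ X]
    (M N : Submodule ℝ X) : Prop :=
  ∀ S : Set X, Bornology.IsBounded S → ∃ κ > (0 : ℝ), ∀ x ∈ S,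
    bregmanDistSet p ((M ⊓ N : Submodule ℝ X) : Set X) x ≤
      κ * max (bregmanDistSet p (M : Set X) x) (bregmanDistSet p (N : Set X) x)

/-!
The Bregman distance is positively homogeneous of degree `p`, that is
`D_p(t x, t y) = t ^ p D_p(x, y)` for `t > 0`, and so are `x ↦ D_p(M, x)` for a subspace `M` and
the maximum of two such functions. An implication between smallness conditions on homogeneous
functions rescales to a linear estimate, and a linear estimate near the origin rescales to the
whole space. Convexity enters through the existence of Bregman projections (functionals attain
their norm), smoothness through the nonnegativity of `D_p`, which is the gradient inequality for
`x ↦ (1/p)‖x‖ ^ p`.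
-/

theorem isComplete_inter_of_isClosed {α : Type*} [UniformSpace α] {s t : Set α}
    (hs : IsComplete s) (ht : IsClosed t) : IsComplete (s ∩ t) := by
  intro f hf hle
  obtain ⟨x, hxs, hfx⟩ := hs f hf (hle.trans (principal_mono.2 Set.inter_subset_left))
  have := hf.1
  have hft : ∀ᶠ y in f, y ∈ t := hle (mem_principal.2 Set.inter_subset_right)
  exact ⟨x, ⟨hxs, ht.mem_of_tendsto (f := id) hfx hft⟩, hfx⟩

/-- Positive homogeneity of degree `p`, the scaling property of Bregman distances. Only `t > 0` is
allowed, since `t ^ p` follows a junk convention for negative `t` and non-integer `p`. -/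
def PosHomogeneous {E : Type*} [SMul ℝ E] (p : ℝ) (f : E → ℝ) : Prop :=
  ∀ ⦃t : ℝ⦄, 0 < t → ∀ x, f (t • x) = t ^ p * f x

namespace PosHomogeneous

theorem of_le {E : Type*} [MulAction ℝ E] {p : ℝ} {f : E → ℝ}
    (h : ∀ t : ℝ, 0 < t → ∀ x, f (t • x) ≤ t ^ p * f x) : PosHomogeneous p f := by
  intro t ht x
  refine le_antisymm (h t ht x) ?_
  have hinv : f x ≤ (t ^ p)⁻¹ * f (t • x) := by
    simpa only [inv_smul_smul₀ ht.ne', Real.inv_rpow ht.le] using h t⁻¹ (inv_pos.2 ht) (t • x)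
  rwa [le_inv_mul_iff₀ (Real.rpow_pos_of_pos ht p)] at hinv

theorem max {E : Type*} [SMul ℝ E] {p : ℝ} {f g : E → ℝ} (hf : PosHomogeneous p f)
    (hg : PosHomogeneous p g) : PosHomogeneous p fun x => max (f x) (g x) := by
  intro t ht x
  simp only [hf ht, hg ht, mul_max_of_nonneg _ _ (Real.rpow_nonneg ht.le p)]

theorem le_inv_mul_of_lt_imp_lt_one {E : Type*} [SMul ℝ E] {p : ℝ} {f g : E → ℝ} (hp : p ≠ 0)
    (hf : PosHomogeneous p f) (hg : PosHomogeneous p g) (hg_nonneg : ∀ x, 0 ≤ g x) {δ : ℝ}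
    (hδ : 0 < δ) (h : ∀ x, g x < δ → f x < 1) (x : E) : f x ≤ δ⁻¹ * g x := by
  obtain hfx | hfx := le_or_gt (f x) 0
  · exact hfx.trans (mul_nonneg (inv_nonneg.2 hδ.le) (hg_nonneg x))
  obtain ⟨t, ht, htp⟩ : ∃ t : ℝ, 0 < t ∧ t ^ p = (f x)⁻¹ :=
    ⟨(f x)⁻¹ ^ p⁻¹, by positivity, Real.rpow_inv_rpow (by positivity) hp⟩
  have hf_one : f (t • x) = 1 := by rw [hf ht, htp, inv_mul_cancel₀ hfx.ne']
  have hδ_le : δ ≤ (f x)⁻¹ * g x := by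
    rw [← htp, ← hg ht]
    exact not_lt.1 fun hlt => (h _ hlt).ne hf_one
  rw [le_inv_mul_iff₀ hfx] at hδ_le
  rwa [le_inv_mul_iff₀ hδ, mul_comm]

theorem le_mul_of_eventually {E : Type*} [AddCommGroup E] [Module ℝ E] [TopologicalSpace E]
    [ContinuousSMul ℝ E] {p κ : ℝ} {f g : E → ℝ} (hf : PosHomogeneous p f)
    (hg : PosHomogeneous p g) (h : ∀ᶠ x in 𝓝 0, f x ≤ κ * g x) (x : E) : f x ≤ κ * g x := by
  have hlim : Tendsto (fun t : ℝ => t • x) (𝓝[>] 0) (𝓝 0) := by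
    have : Continuous fun t : ℝ => t • x := by fun_prop
    exact (this.tendsto' 0 0 (zero_smul ℝ x)).mono_left nhdsWithin_le_nhds
  obtain ⟨t, hle, ht : 0 < t⟩ := ((hlim.eventually h).and self_mem_nhdsWithin).exists
  rw [hf ht, hg ht, mul_left_comm] at hle
  exact le_of_mul_le_mul_left hle (Real.rpow_pos_of_pos ht p)

end PosHomogeneous

section UniformConvexity

theorem modConvex_le_s5 {E : Type*} [NormedAddCommGroup E] {ε : ℝ} {x y : E} (hx : ‖x‖ = 1)
    (hy : ‖y‖ = 1) (hxy : ε ≤ ‖x - y‖) : modConvex E ε ≤ 1 - ‖x + y‖ / 2 := by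
  refine csInf_le ⟨0, ?_⟩ ⟨x, y, hx, hy, hxy, rfl⟩
  rintro _ ⟨a, b, ha, hb, -, rfl⟩
  linarith [norm_add_le a b]

theorem UnifConvex.uniformConvexSpace {E : Type*} [NormedAddCommGroup E] (h : UnifConvex E) :
    UniformConvexSpace E where
  uniform_convex ε hε := by
    have hpos := h (min ε 2) (lt_min hε two_pos) (min_le_right _ _)
    refine ⟨2 * modConvex E (min ε 2), by positivity, fun x hx y hy hxy => ?_⟩
    linarith [modConvex_le_s5 hx hy ((min_le_left ε 2).trans hxy)]

instance uniformConvexSpace_submodule [UniformConvexSpace X] (M : Submodule ℝ X) :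
    UniformConvexSpace M where
  uniform_convex ε hε := by
    obtain ⟨δ, hδ, h⟩ := exists_forall_sphere_dist_add_le_two_sub X hε
    exact ⟨δ, hδ, fun x hx y hy hxy => h hx hy hxy⟩

theorem exists_pos_norm_sub_lt_of_lt_apply [UniformConvexSpace X] {ψ : X →L[ℝ] ℝ} (hψ : ψ ≠ 0)
    {ε : ℝ} (hε : 0 < ε) : ∃ η > 0, ∀ u v : X, ‖u‖ ≤ 1 → ‖v‖ ≤ 1 →
      ‖ψ‖ - η < ψ u → ‖ψ‖ - η < ψ v → ‖u - v‖ < ε := by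
  obtain ⟨δ, hδ, h⟩ := exists_forall_closed_ball_dist_add_le_two_sub X hε
  refine ⟨‖ψ‖ * δ / 2, half_pos (mul_pos (norm_pos_iff.2 hψ) hδ),
    fun u v hu hv hψu hψv => not_le.1 fun hle => ?_⟩
  have hsum : ψ u + ψ v ≤ ‖ψ‖ * (2 - δ) := by
    rw [← map_add]
    exact (le_abs_self _).trans (ψ.le_opNorm_of_le (h hu hv hle))
  linarith

theorem exists_lt_apply_of_lt_norm (ψ : X →L[ℝ] ℝ) {r : ℝ} (hr : r < ‖ψ‖) :
    ∃ u : X, ‖u‖ ≤ 1 ∧ r < ψ u := by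
  obtain ⟨u, hu, hru⟩ := ψ.exists_lt_apply_of_lt_opNorm hr
  obtain h | h := abs_choice (ψ u)
  · exact ⟨u, hu.le, by rwa [Real.norm_eq_abs, h] at hru⟩
  · exact ⟨-u, by rw [norm_neg]; exact hu.le, by rwa [Real.norm_eq_abs, h, ← map_neg] at hru⟩

theorem exists_norm_le_one_apply_eq_norm [CompleteSpace X] [UniformConvexSpace X]
    (ψ : X →L[ℝ] ℝ) : ∃ u : X, ‖u‖ ≤ 1 ∧ ψ u = ‖ψ‖ := by
  obtain rfl | hψ := eq_or_ne ψ 0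
  · exact ⟨0, by simp⟩
  have hlt (n : ℕ) : ‖ψ‖ - 1 / ((n : ℝ) + 1) < ‖ψ‖ := sub_lt_self _ Nat.one_div_pos_of_nat
  choose u hu hψu using fun n => exists_lt_apply_of_lt_norm ψ (hlt n)
  have hlower : Tendsto (fun n : ℕ => ‖ψ‖ - 1 / ((n : ℝ) + 1)) atTop (𝓝 ‖ψ‖) := by
    simpa using tendsto_const_nhds.sub (tendsto_one_div_add_atTop_nhds_zero_nat (𝕜 := ℝ))
  have hupper (n : ℕ) : ψ (u n) ≤ ‖ψ‖ := (le_abs_self _).trans (ψ.unit_le_opNorm _ (hu n))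
  have hlim : Tendsto (fun n => ψ (u n)) atTop (𝓝 ‖ψ‖) :=
    tendsto_of_tendsto_of_tendsto_of_le_of_le hlower tendsto_const_nhds (fun n => (hψu n).le) hupper
  have hcauchy : CauchySeq u := by
    refine Metric.cauchySeq_iff.2 fun ε hε => ?_
    obtain ⟨η, hη, hdiam⟩ := exists_pos_norm_sub_lt_of_lt_apply hψ hε
    obtain ⟨K, hK⟩ := eventually_atTop.1 (hlim.eventually_const_lt (sub_lt_self _ hη))
    refine ⟨K, fun m hm n hn => ?_⟩
    rw [dist_eq_norm]
    exact hdiam _ _ (hu m) (hu n) (hK m hm) (hK n hn)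
  obtain ⟨v, hv⟩ := cauchySeq_tendsto_of_complete hcauchy
  exact ⟨v, le_of_tendsto' hv.norm hu,
    tendsto_nhds_unique ((ψ.continuous.tendsto v).comp hv) hlim⟩

end UniformConvexity

section UniformSmoothness

theorem le_modSmooth_s5 {x y : X} (hx : ‖x‖ = 1) (hy : ‖y‖ = 1) (τ : ℝ) :
    (‖x + τ • y‖ + ‖x - τ • y‖) / 2 - 1 ≤ modSmooth X τ := by
  refine le_csSup ⟨|τ|, ?_⟩ ⟨x, y, hx, hy, rfl⟩
  rintro _ ⟨a, b, ha, hb, rfl⟩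
  have hτb : ‖τ • b‖ = |τ| := by rw [norm_smul, hb, mul_one, Real.norm_eq_abs]
  linarith [norm_add_le a (τ • b), norm_sub_le a (τ • b)]

theorem UnifSmooth.hasFDerivAt_norm (hX : UnifSmooth X) {x : X} (hx : ‖x‖ = 1) {F : X →L[ℝ] ℝ}
    (hF : ‖F‖ ≤ 1) (hFx : F x = 1) : HasFDerivAt (fun y : X => ‖y‖) F x := by
  have hF_le (y : X) : F y ≤ ‖y‖ :=
    (le_abs_self _).trans ((F.le_of_opNorm_le hF y).trans_eq (one_mul _))
  rw [hasFDerivAt_iff_isLittleO_nhds_zero, Asymptotics.isLittleO_iff]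
  intro c hc
  have hmod : ∀ᶠ τ in 𝓝[>] (0 : ℝ), modSmooth X τ / τ < c / 2 :=
    hX.eventually_lt_const (by positivity)
  have hnorm : Tendsto (fun h : X => ‖h‖) (𝓝 0) (𝓝 0) := tendsto_norm_zero
  filter_upwards [hnorm.eventually (eventually_nhdsWithin_iff.1 hmod)] with h hmod_h
  obtain rfl | hh := eq_or_ne h 0
  · simp
  have hh_pos : 0 < ‖h‖ := norm_pos_iff.2 hh
  have hmod_lt : modSmooth X ‖h‖ < c / 2 * ‖h‖ := (div_lt_iff₀ hh_pos).1 (hmod_h hh_pos)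
  have hle_mod : (‖x + h‖ + ‖x - h‖) / 2 - 1 ≤ modSmooth X ‖h‖ := by
    have hunit : ‖‖h‖⁻¹ • h‖ = 1 := norm_smul_inv_norm (𝕜 := ℝ) hh
    simpa only [smul_inv_smul₀ hh_pos.ne'] using le_modSmooth_s5 hx hunit ‖h‖
  have hadd : 1 + F h ≤ ‖x + h‖ := by simpa only [map_add, hFx] using hF_le (x + h)
  have hsub : 1 - F h ≤ ‖x - h‖ := by simpa only [map_sub, hFx] using hF_le (x - h)
  rw [Real.norm_eq_abs, hx, abs_of_nonneg (by linarith)]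
  linarith

theorem UnifSmooth.differentiableAt_norm (hX : UnifSmooth X) {x : X} (hx : x ≠ 0) :
    DifferentiableAt ℝ (fun y : X => ‖y‖) x := by
  have hunit : ‖‖x‖⁻¹ • x‖ = 1 := norm_smul_inv_norm (𝕜 := ℝ) hx
  obtain ⟨F, hF, hFx⟩ := exists_dual_vector'' ℝ (‖x‖⁻¹ • x)
  rw [differentiableAt_norm_smul (inv_ne_zero (norm_ne_zero_iff.2 hx))]
  exact (hX.hasFDerivAt_norm hunit hF (by simpa [hunit] using hFx)).differentiableAt

end UniformSmoothness

section BregmanDistance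

theorem fderiv_apply_sub_le_of_convexOn {S : Set X} {f : X → ℝ} {f' : X →L[ℝ] ℝ} {x y : X}
    (hf : ConvexOn ℝ S f) (hx : x ∈ S) (hy : y ∈ S) (hf' : HasFDerivAt f f' x) :
    f' (y - x) ≤ f y - f x := by
  let line : ℝ →ᵃ[ℝ] X := AffineMap.lineMap x y
  have hderiv : HasDerivAt (f ∘ line) (f' (y - x)) 0 := by
    refine HasFDerivAt.comp_hasDerivAt 0 ?_ AffineMap.hasDerivAt_lineMap
    simpa [line] using hf'
  have hslope := (hf.comp_affineMap line).le_slope_of_hasDerivAt (x := 0) (y := 1)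
    (by simpa [line] using hx) (by simpa [line] using hy) one_pos hderiv
  simpa [slope_def_field, line] using hslope

theorem convexOn_norm_rpow {p : ℝ} (hp : 1 ≤ p) : ConvexOn ℝ Set.univ fun x : X => ‖x‖ ^ p := by
  refine ⟨convex_univ, fun x _ y _ a b ha hb hab => ?_⟩
  have hnorm : ‖a • x + b • y‖ ≤ a • ‖x‖ + b • ‖y‖ :=
    convexOn_univ_norm.2 (Set.mem_univ x) (Set.mem_univ y) ha hb hab
  calc ‖a • x + b • y‖ ^ p ≤ (a • ‖x‖ + b • ‖y‖) ^ p :=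
        Real.rpow_le_rpow (norm_nonneg _) hnorm (zero_le_one.trans hp)
    _ ≤ a • ‖x‖ ^ p + b • ‖y‖ ^ p :=
        (convexOn_rpow hp).2 (norm_nonneg x) (norm_nonneg y) ha hb hab

theorem dualityMap_zero {p : ℝ} (hp : 0 < p) : dualityMap p (0 : X) = 0 := by
  refine IsLocalMin.fderiv_eq_zero (Eventually.of_forall fun y => ?_)
  simp only [norm_zero, Real.zero_rpow hp.ne', mul_zero]
  positivity

theorem dualityMap_smul (p : ℝ) {t : ℝ} (ht : 0 < t) (x : X) :
    dualityMap p (t • x) = t ^ (p - 1) • dualityMap p x := by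
  have hscale : (fun y : X => 1 / p * ‖t • y‖ ^ p) = t ^ p • fun y : X => 1 / p * ‖y‖ ^ p := by
    funext y
    rw [norm_smul_of_nonneg ht.le, Real.mul_rpow ht.le (norm_nonneg _), Pi.smul_apply, smul_eq_mul]
    ring
  have hchain : t • dualityMap p (t • x) = t ^ p • dualityMap p x := by
    rw [dualityMap, ← fderiv_comp_smul (f := fun y : X => 1 / p * ‖y‖ ^ p), hscale,
      fderiv_const_smul_field, Pi.smul_apply, dualityMap]
  rw [Real.rpow_sub_one ht.ne', div_eq_inv_mul, mul_smul, ← hchain, inv_smul_smul₀ ht.ne']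

theorem bregmanDist_smul_smul (p : ℝ) {t : ℝ} (ht : 0 < t) (x y : X) :
    bregmanDist p (t • x) (t • y) = t ^ p * bregmanDist p x y := by
  have hpow : t ^ (p - 1) * t = t ^ p := by rw [Real.rpow_sub_one ht.ne', div_mul_cancel₀ _ ht.ne']
  simp only [bregmanDist, ← smul_sub, dualityMap_smul p ht, norm_smul_of_nonneg ht.le,
    Real.mul_rpow ht.le (norm_nonneg _), map_smul, _root_.smul_apply, smul_eq_mul, ← hpow]
  ring

theorem bregmanDist_nonneg {p : ℝ} (hp : 1 ≤ p) {x : X}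
    (hx : x ≠ 0 → DifferentiableAt ℝ (fun y : X => ‖y‖) x) (m : X) : 0 ≤ bregmanDist p m x := by
  have hp_pos : 0 < p := one_pos.trans_le hp
  obtain rfl | hx_ne := eq_or_ne x 0
  · simp only [bregmanDist, dualityMap_zero hp_pos, norm_zero, Real.zero_rpow hp_pos.ne', mul_zero,
      _root_.zero_apply, sub_zero]
    positivity
  have hconv : ConvexOn ℝ Set.univ fun y : X => 1 / p * ‖y‖ ^ p :=
    (convexOn_norm_rpow hp).smul (by positivity)
  have hdiff : DifferentiableAt ℝ (fun y : X => 1 / p * ‖y‖ ^ p) x :=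
    ((hx hx_ne).rpow_const (Or.inl (norm_ne_zero_iff.2 hx_ne))).const_mul _
  exact sub_nonneg.2 (fderiv_apply_sub_le_of_convexOn hconv (Set.mem_univ x) (Set.mem_univ m)
    hdiff.hasFDerivAt)

end BregmanDistance

section BregmanProjection

/-- Every point has a Bregman projection onto `S`; without this, `bregmanProj p S` and
`bregmanDistSet p S` take junk values. -/
def BregmanProximinal (p : ℝ) (S : Set X) : Prop :=
  ∀ x, ∃ y ∈ S, ∀ m ∈ S, bregmanDist p y x ≤ bregmanDist p m x

namespace BregmanProximinal

theorem bregmanProj_mem {p : ℝ} {S : Set X} (hS : BregmanProximinal p S) (x : X) :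
    bregmanProj p S x ∈ S :=
  (Classical.epsilon_spec (hS x)).1

theorem bregmanDistSet_le {p : ℝ} {S : Set X} (hS : BregmanProximinal p S) (x : X) {m : X}
    (hm : m ∈ S) : bregmanDistSet p S x ≤ bregmanDist p m x :=
  (Classical.epsilon_spec (hS x)).2 m hm

theorem posHomogeneous_bregmanDistSet {p : ℝ} {M : Submodule ℝ X}
    (hM : BregmanProximinal p (M : Set X)) :
    PosHomogeneous p (bregmanDistSet p (M : Set X)) := by
  refine .of_le fun t ht x => ?_
  rw [bregmanDistSet, bregmanDistSet, ← bregmanDist_smul_smul p ht]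
  exact hM.bregmanDistSet_le (t • x) (M.smul_mem t (hM.bregmanProj_mem x))

end BregmanProximinal

/-- By Young's inequality the minimum is `-‖ψ‖ ^ q / q`. -/
theorem isMinOn_rpow_norm_sub_apply {ψ : X →L[ℝ] ℝ} {u : X} (hu : ‖u‖ ≤ 1) (hψu : ψ u = ‖ψ‖)
    {p q : ℝ} (hpq : p.HolderConjugate q) :
    IsMinOn (fun y => 1 / p * ‖y‖ ^ p - ψ y) Set.univ (‖ψ‖ ^ (q - 1) • u) := by
  refine isMinOn_univ_iff.2 fun m => ?_
  set s := ‖ψ‖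
  have hs : 0 ≤ s := norm_nonneg ψ
  have hp_pos : 0 < p := hpq.pos
  have hpow_p : (s ^ (q - 1)) ^ p = s ^ q := by rw [← Real.rpow_mul hs, hpq.symm.sub_one_mul_conj]
  have hpow_mul : s ^ (q - 1) * s = s ^ q := by
    rw [← Real.rpow_add_one' hs (by simpa using hpq.symm.ne_zero), sub_add_cancel]
  have hnorm : ‖s ^ (q - 1) • u‖ ^ p ≤ s ^ q := by
    rw [norm_smul_of_nonneg (by positivity), Real.mul_rpow (by positivity) (norm_nonneg u), hpow_p]
    exact mul_le_of_le_one_right (by positivity) (Real.rpow_le_one (norm_nonneg u) hu hp_pos.le)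
  have hyoung : ψ m ≤ ‖m‖ ^ p / p + s ^ q / q :=
    calc ψ m ≤ ‖m‖ * s := by rw [mul_comm]; exact (le_abs_self _).trans (ψ.le_opNorm m)
      _ ≤ _ := Real.young_inequality_of_nonneg (norm_nonneg m) hs hpq
  calc 1 / p * ‖s ^ (q - 1) • u‖ ^ p - ψ (s ^ (q - 1) • u)
      ≤ 1 / p * s ^ q - s ^ q := by
        rw [map_smul, smul_eq_mul, hψu, hpow_mul]
        gcongr
    _ = -(s ^ q / q) := by
        have := hpq.inv_add_inv_eq_one
        linear_combination s ^ q * this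
    _ ≤ 1 / p * ‖m‖ ^ p - ψ m := by
        rw [one_div_mul_eq_div]
        linarith

theorem bregmanProximinal_of_isComplete [UniformConvexSpace X] {p : ℝ} (hp : 1 < p)
    {M : Submodule ℝ X} (hM : IsComplete (M : Set X)) : BregmanProximinal p (M : Set X) := by
  intro x
  have : CompleteSpace M := hM.completeSpace_coe
  let ψ : M →L[ℝ] ℝ := (dualityMap p x).comp M.subtypeL
  obtain ⟨u, hu, hψu⟩ := exists_norm_le_one_apply_eq_norm ψ
  let y : M := ‖ψ‖ ^ (p.conjExponent - 1) • u
  refine ⟨y, y.2, fun m hm => ?_⟩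
  have hmin : 1 / p * ‖(y : X)‖ ^ p - dualityMap p x y ≤ 1 / p * ‖m‖ ^ p - dualityMap p x m :=
    isMinOn_univ_iff.1 (isMinOn_rpow_norm_sub_apply hu hψu (.conjExponent hp)) ⟨m, hm⟩
  simp only [bregmanDist, map_sub]
  linarith

end BregmanProjection

section Regularity

variable {p : ℝ} {M N : Submodule ℝ X}

theorem LinearBregmanRegular.bregmanRegular (h : LinearBregmanRegular p M N) :
    BregmanRegular p M N := by
  obtain ⟨κ, hκ, h⟩ := h
  exact fun ε hε => ⟨ε / κ, by positivity, fun x hx => (h x).trans_lt ((lt_div_iff₀' hκ).1 hx)⟩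

theorem LinearBregmanRegular.boundedlyLinearBregmanRegular (h : LinearBregmanRegular p M N) :
    BoundedlyLinearBregmanRegular p M N := by
  obtain ⟨κ, hκ, h⟩ := h
  exact fun S _ => ⟨κ, hκ, fun x _ => h x⟩

theorem BregmanRegular.linearBregmanRegular (hp : 1 ≤ p)
    (hX : ∀ x : X, x ≠ 0 → DifferentiableAt ℝ (fun y : X => ‖y‖) x)
    (hM : BregmanProximinal p (M : Set X)) (hN : BregmanProximinal p (N : Set X))
    (hMN : BregmanProximinal p ((M ⊓ N : Submodule ℝ X) : Set X)) (h : BregmanRegular p M N) :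
    LinearBregmanRegular p M N := by
  obtain ⟨δ, hδ, h⟩ := h 1 one_pos
  refine ⟨δ⁻¹, inv_pos.2 hδ, hMN.posHomogeneous_bregmanDistSet.le_inv_mul_of_lt_imp_lt_one
    (one_pos.trans_le hp).ne'
    (hM.posHomogeneous_bregmanDistSet.max hN.posHomogeneous_bregmanDistSet) (fun x => ?_) hδ h⟩
  exact le_max_of_le_left (bregmanDist_nonneg hp (hX x) _)

theorem BoundedlyLinearBregmanRegular.linearBregmanRegular
    (hM : BregmanProximinal p (M : Set X)) (hN : BregmanProximinal p (N : Set X))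
    (hMN : BregmanProximinal p ((M ⊓ N : Submodule ℝ X) : Set X))
    (h : BoundedlyLinearBregmanRegular p M N) : LinearBregmanRegular p M N := by
  obtain ⟨κ, hκ, h⟩ := h (Metric.ball 0 1) Metric.isBounded_ball
  exact ⟨κ, hκ, hMN.posHomogeneous_bregmanDistSet.le_mul_of_eventually
    (hM.posHomogeneous_bregmanDistSet.max hN.posHomogeneous_bregmanDistSet)
    (eventually_of_mem (Metric.ball_mem_nhds 0 one_pos) h)⟩

end Regularity

theorem statement5_general [UniformConvexSpace X]
    (hX : ∀ x : X, x ≠ 0 → DifferentiableAt ℝ (fun y : X => ‖y‖) x) {p : ℝ} (hp : 1 < p)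
    {M N : Submodule ℝ X} (hM : IsComplete (M : Set X)) (hN : IsComplete (N : Set X)) :
    (BregmanRegular p M N ↔ LinearBregmanRegular p M N) ∧
    (LinearBregmanRegular p M N ↔ BoundedlyLinearBregmanRegular p M N) := by
  have hMN : IsComplete ((M ⊓ N : Submodule ℝ X) : Set X) := by
    rw [Submodule.coe_inf]
    exact isComplete_inter_of_isClosed hM hN.isClosed
  replace hM := bregmanProximinal_of_isComplete hp hM
  replace hN := bregmanProximinal_of_isComplete hp hN
  replace hMN := bregmanProximinal_of_isComplete hp hMN
  exact ⟨⟨fun h => h.linearBregmanRegular hp.le hX hM hN hMN, fun h => h.bregmanRegular⟩,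
    ⟨fun h => h.boundedlyLinearBregmanRegular, fun h => h.linearBregmanRegular hM hN hMN⟩⟩

theorem statement5 {X : Type*} [NormedAddCommGroup X] [NormedSpace ℝ X] [CompleteSpace X]
    (hconv : UnifConvex X) (hsmooth : UnifSmooth X) (p : ℝ) (hp : 1 < p)
    (M N : Submodule ℝ X) (hM : IsClosed (M : Set X)) (hN : IsClosed (N : Set X)) :
    (BregmanRegular p M N ↔ LinearBregmanRegular p M N) ∧
    (LinearBregmanRegular p M N ↔ BoundedlyLinearBregmanRegular p M N) := by
  have := hconv.uniformConvexSpace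
  exact statement5_general (fun _ => hsmooth.differentiableAt_norm) hp hM.isComplete hN.isComplete
end
end
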